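/- (Lemma 1, quadratic case.) Let g(x) = (1/2)xᵀHx + cᵀx with H symmetric positive definite, let E be a real m×n matrix of full row rank m, q ∈ ℝᵐ, and let 0 < α < 1/max{‖E‖₂, ‖EH^{−1/2}‖₂² + ‖H‖₂/4}. Set Θ = [[Iₙ, αEᵀ],[0, (I − α²EEᵀ)^{1/2}]], Q = [[H − αEᵀE, (α/2)HEᵀ],[(α/2)EH, αEEᵀ]], and β = λ_min(Θ^{−T}QΘ^{−1}). Then β > 0 and for any two solutions z₁, z₂ of the primal-dual dynamics ẋ = −Hx − c − Eᵀν, ν̇ = Ex − q, one has ‖Θ(z₁(t) − z₂(t))‖₂ ≤ e^{−βt}‖Θ(z₁(0) − z₂(0))‖₂ for all t ≥ 0; i.e., the primal-dual dynamics is strictly contracting in the metric Θ with rate β. -/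

import Mathlib

open Matrix
open scoped MatrixOrder

/-- The spectral (operator 2-)norm of a real matrix. -/
noncomputable def spectralNorm2 {m n : ℕ} (E : Matrix (Fin m) (Fin n) ℝ) : ℝ :=
  ‖LinearMap.toContinuousLinearMap (Matrix.toEuclideanLin E)‖

/-- The metric transformation `Θ = [[Iₙ, αEᵀ],[0, S]]`, where `S` stands for the positive
semidefinite square root `(I - α²EEᵀ)^{1/2}`. -/
def Theta {n m : ℕ} (E : Matrix (Fin m) (Fin n) ℝ) (α : ℝ)
    (S : Matrix (Fin m) (Fin m) ℝ) : Matrix (Fin n ⊕ Fin m) (Fin n ⊕ Fin m) ℝ :=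
  fromBlocks (1 : Matrix (Fin n) (Fin n) ℝ) (α • Eᵀ) (0 : Matrix (Fin m) (Fin n) ℝ) S

/-- The block matrix `Q = [[H - αEᵀE, (α/2)HEᵀ],[(α/2)EH, αEEᵀ]]`. -/
noncomputable def Qmat {n m : ℕ} (H : Matrix (Fin n) (Fin n) ℝ)
    (E : Matrix (Fin m) (Fin n) ℝ) (α : ℝ) : Matrix (Fin n ⊕ Fin m) (Fin n ⊕ Fin m) ℝ :=
  fromBlocks (H - α • (Eᵀ * E)) ((α / 2) • (H * Eᵀ)) ((α / 2) • (E * H)) (α • (E * Eᵀ))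

lemma aux_nn {n : ℕ} (x : Fin n → ℝ) : 0 ≤ x ⬝ᵥ x :=
  Finset.sum_nonneg fun i _ => mul_self_nonneg (x i)

lemma aux_norm {m n : ℕ} (E : Matrix (Fin m) (Fin n) ℝ) (x : Fin n → ℝ) :
    (E *ᵥ x) ⬝ᵥ (E *ᵥ x) ≤ spectralNorm2 E ^ 2 * (x ⬝ᵥ x) := by
  have h := (LinearMap.toContinuousLinearMap (Matrix.toEuclideanLin E)).le_opNorm (WithLp.toLp 2 x)
  have h2 := pow_le_pow_left₀ (norm_nonneg _) h 2
  rw [mul_pow, ← real_inner_self_eq_norm_sq (WithLp.toLp 2 x), ← real_inner_self_eq_norm_sq] at h2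
  simpa [-inner_self_eq_norm_sq_to_K, spectralNorm2, EuclideanSpace.inner_eq_star_dotProduct] using h2

lemma aux_norm' {n : ℕ} (E : Matrix (Fin n) (Fin n) ℝ) (x : Fin n → ℝ) :
    x ⬝ᵥ (E *ᵥ x) ≤ spectralNorm2 E * (x ⬝ᵥ x) := by
  have h := (LinearMap.toContinuousLinearMap (Matrix.toEuclideanLin E)).le_opNorm (WithLp.toLp 2 x)
  have h3 := real_inner_le_norm (WithLp.toLp 2 x)
    ((LinearMap.toContinuousLinearMap (Matrix.toEuclideanLin E)) (WithLp.toLp 2 x))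
  have h2 := h3.trans (mul_le_mul_of_nonneg_left h (norm_nonneg _))
  rw [mul_left_comm, ← sq, ← real_inner_self_eq_norm_sq (WithLp.toLp 2 x)] at h2
  simpa [-inner_self_eq_norm_sq_to_K, spectralNorm2, EuclideanSpace.inner_eq_star_dotProduct, dotProduct_comm] using h2

lemma aux_ray {ι : Type*} [Fintype ι] [DecidableEq ι] (M : Matrix ι ι ℝ) (hM : M.IsHermitian)
   (b : ℝ) (hb : ∀ i, b ≤ hM.eigenvalues i) (w : ι → ℝ) : b * (w ⬝ᵥ w) ≤ w ⬝ᵥ (M *ᵥ w) := by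
  have h : algebraMap ℝ (Matrix ι ι ℝ) b ≤ M := by
    apply algebraMap_le_of_le_spectrum (ha := hM)
    rw [hM.spectrum_real_eq_range_eigenvalues]
    rintro _ ⟨i, rfl⟩
    exact hb i
  rw [Matrix.le_iff] at h
  have := h.dotProduct_mulVec_nonneg w
  simp [Algebra.algebraMap_eq_smul_one, sub_mulVec, dotProduct_sub, smul_mulVec] at this
  exact this

lemma aux_symm {m n : ℕ} (E : Matrix (Fin m) (Fin n) ℝ) (x : Fin n → ℝ) (y : Fin m → ℝ) :
    y ⬝ᵥ (E *ᵥ x) = x ⬝ᵥ (Eᵀ *ᵥ y) := by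
  rw [dotProduct_mulVec, ← mulVec_transpose, dotProduct_comm]

lemma aux_deriv {n : ℕ} {f g : ℝ → Fin n → ℝ} {f' g' : Fin n → ℝ} {t : ℝ}
    (hf : HasDerivAt f f' t) (hg : HasDerivAt g g' t) :
    HasDerivAt (fun s => f s ⬝ᵥ g s) (f' ⬝ᵥ g t + f t ⬝ᵥ g') t := by
  rw [hasDerivAt_pi] at hf hg
  simp only [dotProduct, ← Finset.sum_add_distrib]
  exact HasDerivAt.fun_sum fun i _ => (hf i).mul (hg i)

/-- quadratic form bound -/
lemma aux_Qpos {n m : ℕ} (H : Matrix (Fin n) (Fin n) ℝ) (hH : H.PosDef)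
    (E : Matrix (Fin m) (Fin n) ℝ) (hinj : ∀ v, Eᵀ *ᵥ v = 0 → v = 0)
    (α : ℝ) (hα0 : 0 < α)
    (hα : α * (spectralNorm2 (E * (CFC.sqrt H)⁻¹) ^ 2 + spectralNorm2 H / 4) < 1)
    (x : Fin n → ℝ) (v : Fin m → ℝ) (hne : x ≠ 0 ∨ v ≠ 0) :
    0 < x ⬝ᵥ (H *ᵥ x) - α * ((E *ᵥ x) ⬝ᵥ (E *ᵥ x)) + α * ((H *ᵥ x) ⬝ᵥ (Eᵀ *ᵥ v))
      + α * ((Eᵀ *ᵥ v) ⬝ᵥ (Eᵀ *ᵥ v)) := by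
  by_cases hx : x = 0
  · subst hx
    have hv : Eᵀ *ᵥ v ≠ 0 := fun h => by
      rcases hne with h1 | h1
      · exact h1 rfl
      · exact h1 (hinj v h)
    have : 0 < (Eᵀ *ᵥ v) ⬝ᵥ (Eᵀ *ᵥ v) :=
      lt_of_le_of_ne (aux_nn _) (fun h => hv (dotProduct_self_eq_zero.1 h.symm))
    simp only [mulVec_zero, dotProduct_zero, zero_dotProduct, mul_zero]
    have := mul_pos hα0 this
    linarith
  have hH0 : (0 : Matrix (Fin n) (Fin n) ℝ) ≤ H := nonneg_iff_posSemidef.2 hH.posSemidef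
  set R := CFC.sqrt H with hR
  have hRR : R * R = H := CFC.sqrt_mul_sqrt_self H hH0
  have hRs : Rᵀ = R := by
    have := (nonneg_iff_posSemidef.1 (CFC.sqrt_nonneg H)).isHermitian
    simpa [IsHermitian, conjTranspose_eq_transpose_of_trivial] using this
  have hRu : IsUnit R.det := by
    have h1 : IsUnit H.det := (Matrix.isUnit_iff_isUnit_det H).1 hH.isUnit
    rw [← hRR, det_mul] at h1
    exact isUnit_of_mul_isUnit_left h1
  set u := R *ᵥ x with hu
  have hxu : R⁻¹ *ᵥ u = x := by
    rw [hu, mulVec_mulVec, nonsing_inv_mul _ hRu, one_mulVec]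
  have h1 : x ⬝ᵥ (H *ᵥ x) = u ⬝ᵥ u := by
    rw [← hRR, ← mulVec_mulVec, ← hu, aux_symm, hRs]
  have h2 : (E *ᵥ x) ⬝ᵥ (E *ᵥ x) ≤ spectralNorm2 (E * R⁻¹) ^ 2 * (u ⬝ᵥ u) := by
    have := aux_norm (E * R⁻¹) u
    rwa [← mulVec_mulVec, hxu] at this
  have h3 : (H *ᵥ x) ⬝ᵥ (H *ᵥ x) ≤ spectralNorm2 H * (u ⬝ᵥ u) := by
    have := aux_norm' H u
    have e : (H *ᵥ x) ⬝ᵥ (H *ᵥ x) = u ⬝ᵥ (H *ᵥ u) := by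
      have e1 : H *ᵥ x = R *ᵥ u := by rw [← hRR, ← mulVec_mulVec]
      rw [e1, aux_symm, hRs, mulVec_mulVec, hRR]
    rw [e]; exact this
  have h4 : 0 ≤ (H *ᵥ x) ⬝ᵥ (H *ᵥ x) / 4 + (H *ᵥ x) ⬝ᵥ (Eᵀ *ᵥ v)
      + (Eᵀ *ᵥ v) ⬝ᵥ (Eᵀ *ᵥ v) := by
    have := aux_nn ((H *ᵥ x) + (2 : ℝ) • (Eᵀ *ᵥ v))
    simp only [dotProduct_add, add_dotProduct, smul_dotProduct, dotProduct_smul, smul_eq_mul,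
      dotProduct_comm (Eᵀ *ᵥ v) (H *ᵥ x)] at this
    linarith
  have h5 : 0 < u ⬝ᵥ u := by
    rw [← h1]
    simpa using hH.dotProduct_mulVec_pos hx
  have h6 := mul_nonneg hα0.le h4
  have h7 := mul_le_mul_of_nonneg_left h2 hα0.le
  have h8 := mul_le_mul_of_nonneg_left h3 hα0.le
  have h9 := mul_lt_mul_of_pos_right hα h5
  rw [h1]
  nlinarith

lemma aux_Q {n m : ℕ} (H : Matrix (Fin n) (Fin n) ℝ) (hH : H.PosDef)
    (E : Matrix (Fin m) (Fin n) ℝ) (α : ℝ) (x : Fin n → ℝ) (v : Fin m → ℝ) :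
    Sum.elim x v ⬝ᵥ (Qmat H E α *ᵥ Sum.elim x v) =
     x ⬝ᵥ (H *ᵥ x) - α * ((E *ᵥ x) ⬝ᵥ (E *ᵥ x)) + α * ((H *ᵥ x) ⬝ᵥ (Eᵀ *ᵥ v))
      + α * ((Eᵀ *ᵥ v) ⬝ᵥ (Eᵀ *ᵥ v)) := by
  have hHs : Hᵀ = H := by
    simpa [IsHermitian, conjTranspose_eq_transpose_of_trivial] using hH.isHermitian
  rw [Qmat, fromBlocks_mulVec]
  simp only [Sum.elim_comp_inl, Sum.elim_comp_inr, sumElim_dotProduct_sumElim, sub_mulVec,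
    smul_mulVec, ← mulVec_mulVec, dotProduct_add, dotProduct_sub, dotProduct_smul, smul_eq_mul]
  rw [aux_symm H (Eᵀ *ᵥ v) x, aux_symm E (H *ᵥ x) v, aux_symm E (Eᵀ *ᵥ v) v,
    ← aux_symm E x (E *ᵥ x), hHs, dotProduct_comm (Eᵀ *ᵥ v) (H *ᵥ x)]
  ring

lemma aux_V {n m : ℕ} (E : Matrix (Fin m) (Fin n) ℝ) (α : ℝ)
    (S : Matrix (Fin m) (Fin m) ℝ) (hS : S.PosSemidef)
    (hSsq : S * S = 1 - α ^ 2 • (E * Eᵀ)) (x : Fin n → ℝ) (v : Fin m → ℝ) :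
    (Theta E α S *ᵥ Sum.elim x v) ⬝ᵥ (Theta E α S *ᵥ Sum.elim x v) =
      x ⬝ᵥ x + 2 * α * (v ⬝ᵥ (E *ᵥ x)) + v ⬝ᵥ v := by
  have hSs : Sᵀ = S := by
    simpa [IsHermitian, conjTranspose_eq_transpose_of_trivial] using hS.isHermitian
  have h1 : (S *ᵥ v) ⬝ᵥ (S *ᵥ v) = v ⬝ᵥ v - α ^ 2 * ((Eᵀ *ᵥ v) ⬝ᵥ (Eᵀ *ᵥ v)) := by
    rw [aux_symm S, hSs, mulVec_mulVec, hSsq, sub_mulVec, smul_mulVec, ← mulVec_mulVec,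
      dotProduct_sub, dotProduct_smul, one_mulVec, aux_symm E, smul_eq_mul]
  rw [Theta, fromBlocks_mulVec]
  simp only [Sum.elim_comp_inl, Sum.elim_comp_inr, sumElim_dotProduct_sumElim,
    smul_mulVec, dotProduct_add, add_dotProduct, dotProduct_smul, smul_dotProduct, smul_eq_mul,
    one_mulVec, zero_mulVec, zero_add]
  rw [h1, dotProduct_comm (Eᵀ *ᵥ v) x, aux_symm E]
  ring

lemma aux_inj {n m : ℕ} (E : Matrix (Fin m) (Fin n) ℝ) (hrank : E.rank = m)
    (v : Fin m → ℝ) (hv : Eᵀ *ᵥ v = 0) : v = 0 := by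
  have h1 : Eᵀ.rank = m := by rw [rank_transpose, hrank]
  have h2 := Eᵀ.mulVecLin.finrank_range_add_finrank_ker
  rw [← Matrix.rank, h1, Module.finrank_fin_fun] at h2
  have h3 : Module.finrank ℝ (LinearMap.ker Eᵀ.mulVecLin) = 0 := by omega
  rw [Submodule.finrank_eq_zero] at h3
  have : v ∈ LinearMap.ker Eᵀ.mulVecLin := LinearMap.mem_ker.2 hv
  rw [h3] at this
  simpa using this

lemma aux_Theta {n m : ℕ} (E : Matrix (Fin m) (Fin n) ℝ) (α : ℝ) (hα0 : 0 < α)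
    (hα : α * spectralNorm2 E < 1)
    (S : Matrix (Fin m) (Fin m) ℝ) (hS : S.PosSemidef)
    (hSsq : S * S = 1 - α ^ 2 • (E * Eᵀ)) : IsUnit (Theta E α S).det := by
  rw [Theta, det_fromBlocks_zero₂₁, det_one, one_mul, isUnit_iff_ne_zero]
  intro hdet
  obtain ⟨v, hv0, hv⟩ := exists_mulVec_eq_zero_iff.2 hdet
  apply hv0
  have h1 : v - α ^ 2 • (E *ᵥ (Eᵀ *ᵥ v)) = 0 := by
    have : (S * S) *ᵥ v = 0 := by rw [← mulVec_mulVec, hv, mulVec_zero]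
    rwa [hSsq, sub_mulVec, smul_mulVec, ← mulVec_mulVec, one_mulVec] at this
  set y := Eᵀ *ᵥ v with hy
  have h2 : v ⬝ᵥ v = α ^ 2 * (y ⬝ᵥ y) := by
    have := congrArg (fun w => v ⬝ᵥ w) h1
    simp only [dotProduct_sub, dotProduct_smul, dotProduct_zero, smul_eq_mul] at this
    rw [aux_symm E] at this
    linarith
  have h3 := aux_norm E y
  have h4 : v ⬝ᵥ v = α ^ 4 * ((E *ᵥ y) ⬝ᵥ (E *ᵥ y)) := by
    have : v = α ^ 2 • (E *ᵥ y) := sub_eq_zero.1 h1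
    conv_lhs => rw [this]
    simp only [smul_dotProduct, dotProduct_smul, smul_eq_mul]
    ring
  have hn : 0 ≤ spectralNorm2 E := norm_nonneg _
  have h5 : (α * spectralNorm2 E) ^ 2 < 1 := by
    have : 0 ≤ α * spectralNorm2 E := by positivity
    nlinarith
  have h6 : v ⬝ᵥ v ≤ (α * spectralNorm2 E) ^ 2 * (v ⬝ᵥ v) := by
    calc v ⬝ᵥ v = α ^ 4 * ((E *ᵥ y) ⬝ᵥ (E *ᵥ y)) := h4
      _ ≤ α ^ 4 * (spectralNorm2 E ^ 2 * (y ⬝ᵥ y)) := by gcongr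
      _ = (α * spectralNorm2 E) ^ 2 * (v ⬝ᵥ v) := by rw [h2]; ring
  have h7 := aux_nn v
  apply dotProduct_self_eq_zero.1
  nlinarith

/-- **Lemma 1, quadratic case.** For the quadratic objective
`g(x) = (1/2)xᵀHx + cᵀx` with `H` symmetric positive definite, `E` of full row rank, and
`0 < α < 1/max{‖E‖₂, ‖EH^{-1/2}‖₂² + ‖H‖₂/4}`, with `Θ = [[I, αEᵀ],[0, (I - α²EEᵀ)^{1/2}]]`
and `β = λ_min(Θ⁻ᵀQΘ⁻¹)`, one has `β > 0` and the primal-dual dynamics is strictly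
contracting in the metric `Θ` with rate `β`:
`‖Θ(z₁(t) - z₂(t))‖₂ ≤ e^{-βt}‖Θ(z₁(0) - z₂(0))‖₂` for all `t ≥ 0`. -/
theorem stmt7 {n m : ℕ} (H : Matrix (Fin n) (Fin n) ℝ) (hH : H.PosDef)
    (c : Fin n → ℝ) (E : Matrix (Fin m) (Fin n) ℝ) (q : Fin m → ℝ)
    (hrank : E.rank = m) (α : ℝ) (hα0 : 0 < α)
    (hα : α < 1 / max (spectralNorm2 E)
        (spectralNorm2 (E * (CFC.sqrt H)⁻¹) ^ 2 + spectralNorm2 H / 4))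
    (S : Matrix (Fin m) (Fin m) ℝ) (hS : S.PosSemidef)
    (hSsq : S * S = 1 - α ^ 2 • (E * Eᵀ))
    (hM : (((Theta E α S)⁻¹)ᵀ * Qmat H E α * (Theta E α S)⁻¹).IsHermitian)
    (β : ℝ) (hβ : β = ⨅ i, hM.eigenvalues i) :
    0 < β ∧
    ∀ (x₁ x₂ : ℝ → Fin n → ℝ) (ν₁ ν₂ : ℝ → Fin m → ℝ),
      (∀ t, HasDerivAt x₁ (-(H *ᵥ x₁ t) - c - Eᵀ *ᵥ ν₁ t) t) →
      (∀ t, HasDerivAt ν₁ (E *ᵥ x₁ t - q) t) →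
      (∀ t, HasDerivAt x₂ (-(H *ᵥ x₂ t) - c - Eᵀ *ᵥ ν₂ t) t) →
      (∀ t, HasDerivAt ν₂ (E *ᵥ x₂ t - q) t) →
      ∀ t : ℝ, 0 ≤ t →
        Real.sqrt ((Theta E α S *ᵥ Sum.elim (x₁ t - x₂ t) (ν₁ t - ν₂ t)) ⬝ᵥ
            (Theta E α S *ᵥ Sum.elim (x₁ t - x₂ t) (ν₁ t - ν₂ t))) ≤
          Real.exp (-β * t) *
            Real.sqrt ((Theta E α S *ᵥ Sum.elim (x₁ 0 - x₂ 0) (ν₁ 0 - ν₂ 0)) ⬝ᵥ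
              (Theta E α S *ᵥ Sum.elim (x₁ 0 - x₂ 0) (ν₁ 0 - ν₂ 0))) := by
  have hmax : 0 < max (spectralNorm2 E)
        (spectralNorm2 (E * (CFC.sqrt H)⁻¹) ^ 2 + spectralNorm2 H / 4) := by
    by_contra hcon
    have := one_div_nonpos.2 (not_lt.1 hcon)
    linarith
  have hαm := (lt_div_iff₀ hmax).1 hα
  have hα1 : α * spectralNorm2 E < 1 :=
    lt_of_le_of_lt (mul_le_mul_of_nonneg_left (le_max_left _ _) hα0.le) hαm
  have hα2 : α * (spectralNorm2 (E * (CFC.sqrt H)⁻¹) ^ 2 + spectralNorm2 H / 4) < 1 :=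
    lt_of_le_of_lt (mul_le_mul_of_nonneg_left (le_max_right _ _) hα0.le) hαm
  have hT := aux_Theta E α hα0 hα1 S hS hSsq
  have hinj := aux_inj E hrank
  have hMw : ∀ w, w ⬝ᵥ ((((Theta E α S)⁻¹)ᵀ * Qmat H E α * (Theta E α S)⁻¹) *ᵥ w) =
      ((Theta E α S)⁻¹ *ᵥ w) ⬝ᵥ (Qmat H E α *ᵥ ((Theta E α S)⁻¹ *ᵥ w)) := by
    intro w
    rw [← mulVec_mulVec, ← mulVec_mulVec, dotProduct_mulVec, ← mulVec_transpose,
      transpose_transpose]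
  have hPD : (((Theta E α S)⁻¹)ᵀ * Qmat H E α * (Theta E α S)⁻¹).PosDef := by
    refine PosDef.of_dotProduct_mulVec_pos hM fun w hw => ?_
    rw [star_trivial, hMw]
    set z := (Theta E α S)⁻¹ *ᵥ w with hz
    have hz0 : z ≠ 0 := by
      intro h0
      apply hw
      have : Theta E α S *ᵥ z = w := by
        rw [hz, mulVec_mulVec, mul_nonsing_inv _ hT, one_mulVec]
      rw [← this, h0, mulVec_zero]
    rw [← Sum.elim_comp_inl_inr z, aux_Q H hH]
    apply aux_Qpos H hH E hinj α hα0 hα2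
    by_contra hcon
    push Not at hcon
    apply hz0
    rw [← Sum.elim_comp_inl_inr z, hcon.1, hcon.2]
    funext i
    cases i <;> rfl
  have hne : Nonempty (Fin n ⊕ Fin m) := by
    by_contra hcon
    rw [not_nonempty_iff, isEmpty_sum] at hcon
    obtain ⟨h1, h2⟩ := hcon
    have e1 : spectralNorm2 E = 0 := by
      rw [spectralNorm2, Subsingleton.elim (LinearMap.toContinuousLinearMap _) 0, norm_zero]
    have e2 : spectralNorm2 (E * (CFC.sqrt H)⁻¹) = 0 := by
      rw [spectralNorm2, Subsingleton.elim (LinearMap.toContinuousLinearMap _) 0, norm_zero]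
    have e3 : spectralNorm2 H = 0 := by
      rw [spectralNorm2, Subsingleton.elim (LinearMap.toContinuousLinearMap _) 0, norm_zero]
    rw [e1, e2, e3] at hmax
    norm_num at hmax
  have hβ0 : 0 < β := by
    obtain ⟨i, hi⟩ := exists_eq_ciInf_of_finite (f := hM.eigenvalues)
    rw [hβ, ← hi]
    exact hPD.eigenvalues_pos i
  refine ⟨hβ0, ?_⟩
  have hkey : ∀ (x : Fin n → ℝ) (v : Fin m → ℝ),
      β * (x ⬝ᵥ x + 2 * α * (v ⬝ᵥ (E *ᵥ x)) + v ⬝ᵥ v) ≤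
        x ⬝ᵥ (H *ᵥ x) - α * ((E *ᵥ x) ⬝ᵥ (E *ᵥ x)) + α * ((H *ᵥ x) ⬝ᵥ (Eᵀ *ᵥ v))
      + α * ((Eᵀ *ᵥ v) ⬝ᵥ (Eᵀ *ᵥ v)) := by
    intro x v
    have := aux_ray _ hM β (fun i => hβ ▸ ciInf_le (Set.finite_range _).bddBelow i)
      (Theta E α S *ᵥ Sum.elim x v)
    rwa [hMw, mulVec_mulVec _ (Theta E α S)⁻¹, nonsing_inv_mul _ hT, one_mulVec,
      aux_Q H hH, aux_V E α S hS hSsq] at this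
  intro x₁ x₂ ν₁ ν₂ hx₁ hν₁ hx₂ hν₂ t ht
  have hx : ∀ t, HasDerivAt (fun s => x₁ s - x₂ s)
      (-(H *ᵥ (x₁ t - x₂ t)) - Eᵀ *ᵥ (ν₁ t - ν₂ t)) t := by
    intro t
    have e : -(H *ᵥ (x₁ t - x₂ t)) - Eᵀ *ᵥ (ν₁ t - ν₂ t) =
        (-(H *ᵥ x₁ t) - c - Eᵀ *ᵥ ν₁ t) - (-(H *ᵥ x₂ t) - c - Eᵀ *ᵥ ν₂ t) := by
      rw [mulVec_sub, mulVec_sub]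
      abel
    rw [e]
    exact (hx₁ t).fun_sub (hx₂ t)
  have hν : ∀ t, HasDerivAt (fun s => ν₁ s - ν₂ s) (E *ᵥ (x₁ t - x₂ t)) t := by
    intro t
    have e : E *ᵥ (x₁ t - x₂ t) = (E *ᵥ x₁ t - q) - (E *ᵥ x₂ t - q) := by
      rw [mulVec_sub]
      abel
    rw [e]
    exact (hν₁ t).fun_sub (hν₂ t)
  have hE : ∀ t, HasDerivAt (fun s => E *ᵥ (x₁ s - x₂ s))
      (E *ᵥ (-(H *ᵥ (x₁ t - x₂ t)) - Eᵀ *ᵥ (ν₁ t - ν₂ t))) t := by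
    intro t
    exact (LinearMap.toContinuousLinearMap E.mulVecLin).hasFDerivAt.comp_hasDerivAt t (hx t)
  rw [aux_V E α S hS hSsq, aux_V E α S hS hSsq]
  generalize hX : (fun s => x₁ s - x₂ s) = X at *
  generalize hN : (fun s => ν₁ s - ν₂ s) = N at *
  have hX' : ∀ s, x₁ s - x₂ s = X s := fun s => congrFun hX s
  have hN' : ∀ s, ν₁ s - ν₂ s = N s := fun s => congrFun hN s
  simp only [hX', hN'] at *
  have hV : ∀ t, HasDerivAt (fun s => Real.exp (2 * β * s) *
      (X s ⬝ᵥ X s + 2 * α * (N s ⬝ᵥ (E *ᵥ X s)) + N s ⬝ᵥ N s)) _ t := fun t =>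
    (((hasDerivAt_id t).const_mul (2 * β)).exp).mul
      (((aux_deriv (hx t) (hx t)).add ((aux_deriv (hν t) (hE t)).const_mul (2 * α))).add
        (aux_deriv (hν t) (hν t)))
  have hanti := antitone_of_hasDerivAt_nonpos hV (by
    intro s
    have hk := hkey (X s) (N s)
    have he := Real.exp_pos (2 * β * s)
    simp only [Pi.zero_apply, id]
    have e1 : (E *ᵥ X s) ⬝ᵥ N s = X s ⬝ᵥ (Eᵀ *ᵥ N s) := by
      rw [dotProduct_comm, aux_symm]
    simp only [mulVec_sub, mulVec_neg, dotProduct_sub, sub_dotProduct, dotProduct_neg,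
      neg_dotProduct, e1, aux_symm E _ (N s), dotProduct_comm (H *ᵥ X s) (X s),
      dotProduct_comm (Eᵀ *ᵥ N s) (X s), dotProduct_comm (Eᵀ *ᵥ N s) (H *ᵥ X s)] at hk ⊢
    nlinarith [mul_le_mul_of_nonneg_left hk he.le])
  have hfin := hanti ht
  simp only [mul_zero, Real.exp_zero, one_mul] at hfin
  have hsq : Real.exp (-β * t) = Real.sqrt (Real.exp (-(2 * β * t))) := by
    rw [Real.sqrt_eq_rpow, ← Real.exp_mul]
    congr 1
    ring
  rw [hsq, ← Real.sqrt_mul (Real.exp_pos _).le]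
  apply Real.sqrt_le_sqrt
  rw [Real.exp_neg, inv_mul_eq_div, le_div_iff₀ (Real.exp_pos _), mul_comm]
  exact hfin
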